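/- (Inductive step of Theorem 1.) Let E, F be real normed vector spaces, a_x, a_u class-𝒦 functions, and f : E → F → E satisfy ‖f(x¹,u) − f(x²,u)‖ ≤ a_x(‖x¹ − x²‖) and ‖f(x,u¹) − f(x,u²)‖ ≤ a_u(‖u¹ − u²‖) for all arguments. Let U_c ⊆ F, let X_f ⊆ E be nonempty, let L ≥ 1 and k_f with L dividing k_f, and let 0 ≤ k ≤ k_f − 2. Suppose v is an admissible blocked sequence at time k (v(i) ∈ U_c for i = 1,…,N(k)) whose nominal blocked-input trajectory from x̃ over horizon k_f − k has terminal distance Δ(x(k_f−k|k), X_f) ≤ γ. Let d ∈ F with ‖d‖ ≤ d̄ and x̃′ = f(x̃, v(1) + d). Then there exists an admissible blocked sequence v′ at time k+1 (namely v itself if L does not divide k+1, and the shift v′(i) = v(i+1) otherwise) whose nominal blocked-input trajectory from x̃′ over horizon k_f − k − 1 has terminal distance Δ(x(k_f−k−1|k+1), X_f) ≤ γ + β_{k_f−k−1}(d̄), where β_0(d) = a_u(d) and β_j(d) = a_u(d) + a_x(β_{j−1}(d)). -/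

import Mathlib

/-!
From time `k + 1` on, `v` or its shift prescribes at every absolute time the input that `v`
prescribed from time `k`. Without disturbance the new trajectory would therefore be the tail of the
old one. The disturbance moves its initial state by at most `au d̄`, and `j` further steps turn this
into a deviation of at most `ax^[j] (au d̄)`, which is below `β_j(d̄)`. The distance to `Xf` being
1-Lipschitz, the terminal distance grows by no more than that. The shift is admissible because
`N(k)` drops by one at a block boundary, the last block being complete as `L` divides `k_f`.
-/

open scoped NNReal

/-- A function `a : [0,∞) → [0,∞)` is of class 𝒦 if it is continuous,
strictly increasing, and satisfies `a 0 = 0`. -/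
def IsClassK (a : ℝ≥0 → ℝ≥0) : Prop :=
  Continuous a ∧ StrictMono a ∧ a 0 = 0

/-- The sequence β_k defined by β_0 = a_u and β_k(d) = a_u(d) + a_x(β_{k-1}(d)). -/
def beta (au ax : ℝ≥0 → ℝ≥0) : ℕ → ℝ≥0 → ℝ≥0
  | 0, d => au d
  | k + 1, d => au d + ax (beta au ax k d)

/-- The blocking index b(j,k) = ⌊(j + k − ⌊k/L⌋·L)/L⌋ + 1. -/
def bIdx (L j k : ℕ) : ℕ := (j + k - k / L * L) / L + 1

/-- The number of free (blocked) input values N(k) = ⌈(k_f − k)/L⌉. -/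
def Nfree (L kf k : ℕ) : ℕ := (kf - k + L - 1) / L

/-- The nominal blocked-input trajectory x(j|k) from state x at time k:
x(0|k) = x and x(j+1|k) = f(x(j|k), v(b(j,k))). -/
def traj {E F : Type*} (f : E → F → E) (L : ℕ) (v : ℕ → F) (x : E) (k : ℕ) : ℕ → E
  | 0 => x
  | j + 1 => f (traj f L v x k j) (v (bIdx L j k))

open scoped ENNReal

lemma bIdx_eq (L j k : ℕ) : bIdx L j k = (j + k % L) / L + 1 := by
  rw [bIdx, Nat.add_sub_assoc (Nat.div_mul_le_self k L), ← Nat.mod_eq_sub_div_mul]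

lemma bIdx_zero (L k : ℕ) : bIdx L 0 k = 1 := by
  rw [bIdx_eq, zero_add, Nat.mod_div_self]

lemma bIdx_succ_of_not_dvd {L k : ℕ} (h : ¬ L ∣ k + 1) (j : ℕ) :
    bIdx L (j + 1) k = bIdx L j (k + 1) := by
  rw [bIdx, bIdx, Nat.succ_div_of_not_dvd h, add_right_comm, add_assoc j]

lemma bIdx_succ_of_dvd {L k : ℕ} (h : L ∣ k + 1) (j : ℕ) :
    bIdx L (j + 1) k = bIdx L j (k + 1) + 1 := by
  have hL : 0 < L := Nat.pos_of_dvd_of_pos h k.succ_pos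
  have hmod : k % L + 1 = L := by
    have hblock : (k / L + 1) * L = k + 1 := by
      rw [← Nat.succ_div_of_dvd h, Nat.div_mul_cancel h]
    have := Nat.div_add_mod' k L
    rw [add_one_mul] at hblock
    omega
  rw [bIdx_eq, bIdx_eq, Nat.mod_eq_zero_of_dvd h, add_right_comm j, add_assoc j, hmod, add_zero,
    Nat.add_div_right j hL]

lemma Nfree_antitone (L kf : ℕ) : Antitone (Nfree L kf) := fun k l h =>
  Nat.div_le_div_right (by omega)

lemma Nfree_eq_succ_of_dvd {L kf k : ℕ} (hkf : L ∣ kf) (hk : k < kf) (h : L ∣ k + 1) :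
    Nfree L kf k = Nfree L kf (k + 1) + 1 := by
  have hL : 0 < L := Nat.pos_of_dvd_of_pos h k.succ_pos
  have hrem : L ∣ kf - (k + 1) := Nat.dvd_sub hkf h
  rw [Nfree, Nfree, show kf - k + L - 1 = kf - (k + 1) + L by omega, Nat.add_div_right _ hL,
    Nat.add_sub_assoc hL, Nat.add_div_of_dvd_right hrem, Nat.div_eq_of_lt (Nat.sub_one_lt_of_lt hL),
    add_zero]

/-- The candidate blocked sequence at time `k + 1` built from a blocked sequence `v` at time `k`:
the first entry is dropped if a new block starts at time `k + 1`, i.e. if `L` divides `k + 1`. -/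
def nextInputs {F : Type*} (L k : ℕ) (v : ℕ → F) : ℕ → F :=
  if L ∣ k + 1 then fun i => v (i + 1) else v

lemma nextInputs_bIdx {F : Type*} (L k : ℕ) (v : ℕ → F) (j : ℕ) :
    nextInputs L k v (bIdx L j (k + 1)) = v (bIdx L (j + 1) k) := by
  unfold nextInputs
  split_ifs with h
  · rw [bIdx_succ_of_dvd h]
  · rw [bIdx_succ_of_not_dvd h]

lemma nextInputs_mem {F : Type*} {Uc : Set F} {L kf k : ℕ} {v : ℕ → F} (hkf : L ∣ kf) (hk : k < kf)
    (hadm : ∀ i, 1 ≤ i → i ≤ Nfree L kf k → v i ∈ Uc) (i : ℕ) (hi : 1 ≤ i)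
    (hiN : i ≤ Nfree L kf (k + 1)) : nextInputs L k v i ∈ Uc := by
  unfold nextInputs
  split_ifs with h
  · have hN := Nfree_eq_succ_of_dvd hkf hk h
    exact hadm (i + 1) (by omega) (by omega)
  · exact hadm i hi (hiN.trans (Nfree_antitone L kf k.le_succ))

lemma traj_nextInputs {E F : Type*} (f : E → F → E) (L : ℕ) (v : ℕ → F) (x : E) (k j : ℕ) :
    traj f L (nextInputs L k v) (f x (v 1)) (k + 1) j = traj f L v x k (j + 1) := by
  induction j with
  | zero => simp only [traj, bIdx_zero]
  | succ j ih => rw [traj, traj, ih, nextInputs_bIdx]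

lemma nndist_traj_le_iterate {E F : Type*} [PseudoMetricSpace E] {ax : ℝ≥0 → ℝ≥0}
    (hax : Monotone ax) {f : E → F → E}
    (hfx : ∀ x₁ x₂ u, nndist (f x₁ u) (f x₂ u) ≤ ax (nndist x₁ x₂))
    (L : ℕ) (v : ℕ → F) (x y : E) (k j : ℕ) :
    nndist (traj f L v x k j) (traj f L v y k j) ≤ ax^[j] (nndist x y) := by
  induction j with
  | zero => rfl
  | succ j ih =>
    rw [Function.iterate_succ_apply']
    exact (hfx _ _ _).trans (hax ih)

lemma iterate_le_beta (au : ℝ≥0 → ℝ≥0) {ax : ℝ≥0 → ℝ≥0} (hax : Monotone ax) (j : ℕ) (d : ℝ≥0) :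
    ax^[j] (au d) ≤ beta au ax j d := by
  induction j with
  | zero => rfl
  | succ j ih =>
    rw [Function.iterate_succ_apply']
    exact (hax ih).trans le_add_self

lemma infNndist_le_add_of_infEDist_le_add {E : Type*} [PseudoMetricSpace E] {s : Set E}
    (hs : s.Nonempty) {x y : E} {r : ℝ≥0} (h : Metric.infEDist x s ≤ Metric.infEDist y s + r) :
    Metric.infNndist x s ≤ Metric.infNndist y s + r := by
  have coe_infNndist (z : E) : (Metric.infNndist z s : ℝ≥0∞) = Metric.infEDist z s :=
    ENNReal.coe_toNNReal (Metric.infEDist_ne_top hs)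
  rw [← coe_infNndist, ← coe_infNndist] at h
  exact_mod_cast h

theorem relaxed_SBPC_inductive_step_general {E F : Type*} [PseudoMetricSpace E]
    [PseudoMetricSpace F] {ax au : ℝ≥0 → ℝ≥0} (hax : Monotone ax) (hau : Monotone au)
    {f : E → F → E} (hfx : ∀ x₁ x₂ u, nndist (f x₁ u) (f x₂ u) ≤ ax (nndist x₁ x₂))
    (hfu : ∀ x u₁ u₂, nndist (f x u₁) (f x u₂) ≤ au (nndist u₁ u₂))
    {Uc : Set F} (Xf : Set E) {L kf k : ℕ} (hL : 1 ≤ L) (hkf : L ∣ kf) (hk : k < kf)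
    {v : ℕ → F} (hadm : ∀ i, 1 ≤ i → i ≤ Nfree L kf k → v i ∈ Uc)
    (x : E) {u : F} {δ : ℝ≥0} (hu : nndist u (v 1) ≤ δ) :
    (∀ i, 1 ≤ i → i ≤ Nfree L kf (k + 1) → nextInputs L k v i ∈ Uc) ∧
      Metric.infEDist (traj f L (nextInputs L k v) (f x u) (k + 1) (kf - (k + 1))) Xf
        ≤ Metric.infEDist (traj f L v x k (kf - k)) Xf + ↑(ax^[kf - k - 1] (au δ)) := by
  refine ⟨nextInputs_mem hkf hk hadm, ?_⟩
  obtain ⟨n, rfl⟩ := Nat.exists_eq_add_of_lt hk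
  rw [show k + n + 1 - (k + 1) = n by omega, show k + n + 1 - k = n + 1 by omega,
    Nat.add_sub_cancel, ← traj_nextInputs]
  have hinit : nndist (f x u) (f x (v 1)) ≤ au δ := (hfu x u (v 1)).trans (hau hu)
  have hterm := (nndist_traj_le_iterate hax hfx L (nextInputs L k v) (f x u) (f x (v 1))
    (k + 1) n).trans (hax.iterate n hinit)
  refine Metric.infEDist_le_infEDist_add_edist.trans (add_le_add_right ?_ _)
  rw [edist_nndist]
  exact ENNReal.coe_le_coe.2 hterm

/-- inductive step of Theorem 1: if v is admissible at time k with
nominal terminal distance at most γ from x̃, and the plant moves to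
x̃′ = f(x̃, v(1) + d) with ‖d‖ ≤ d̄, then there is an admissible sequence at time
k + 1 (v itself if L ∤ k+1, its shift otherwise) whose nominal terminal distance
from x̃′ is at most γ + β_{k_f−k−1}(d̄). -/
theorem relaxed_SBPC_inductive_step {E F : Type*}
    [NormedAddCommGroup E] [NormedSpace ℝ E] [NormedAddCommGroup F] [NormedSpace ℝ F]
    (ax au : ℝ≥0 → ℝ≥0) (hax : IsClassK ax) (hau : IsClassK au)
    (f : E → F → E)
    (hfx : ∀ (x1 x2 : E) (u : F), ‖f x1 u - f x2 u‖₊ ≤ ax ‖x1 - x2‖₊)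
    (hfu : ∀ (x : E) (u1 u2 : F), ‖f x u1 - f x u2‖₊ ≤ au ‖u1 - u2‖₊)
    (Uc : Set F) (Xf : Set E) (hXf : Xf.Nonempty)
    (L kf : ℕ) (hL : 1 ≤ L) (hdvd : L ∣ kf)
    (k : ℕ) (hk : k + 2 ≤ kf)
    (v : ℕ → F) (hadm : ∀ i, 1 ≤ i → i ≤ Nfree L kf k → v i ∈ Uc)
    (xt : E) (γ : ℝ≥0)
    (hγ : Metric.infNndist (traj f L v xt k (kf - k)) Xf ≤ γ)
    (d : F) (dbar : ℝ≥0) (hd : ‖d‖₊ ≤ dbar) :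
    ∃ v' : ℕ → F,
      (¬ L ∣ (k + 1) → v' = v) ∧
      (L ∣ (k + 1) → v' = fun i => v (i + 1)) ∧
      (∀ i, 1 ≤ i → i ≤ Nfree L kf (k + 1) → v' i ∈ Uc) ∧
      Metric.infNndist (traj f L v' (f xt (v 1 + d)) (k + 1) (kf - (k + 1))) Xf
        ≤ γ + beta au ax (kf - k - 1) dbar := by
  simp only [← nndist_eq_nnnorm] at hfx hfu
  have hu : nndist (v 1 + d) (v 1) ≤ dbar := by simpa [nndist_eq_nnnorm] using hd
  obtain ⟨hmem, hdist⟩ := relaxed_SBPC_inductive_step_general hax.2.1.monotone hau.2.1.monotone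
    hfx hfu Xf hL hdvd (by omega) hadm xt hu
  exact ⟨nextInputs L k v, fun h => if_neg h, fun h => if_pos h, hmem,
    (infNndist_le_add_of_infEDist_le_add hXf hdist).trans
      (add_le_add hγ (iterate_le_beta au hax.2.1.monotone _ _))⟩
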